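/- Let Δ ≥ 2 and let T' ∈ ℤ^{C(Δ,2)×Δ} be the arc-node incidence matrix of the directed graph on nodes {1, …, Δ} with arcs {(i,j) : i < j}, and let T be T' with its last column deleted. Let B ∈ ℤ^{(Δ−1)×(Δ−1)} be the matrix whose first Δ−2 rows are the first Δ−2 standard unit row vectors and whose last row is (Δ−1, …, Δ−1, Δ), and set A := T·B ∈ ℤ^{C(Δ,2)×(Δ−1)}. Then A has full column rank, A is Δ-modular, and ‖Az‖_∞ ≥ 2 for every nonzero z ∈ ℤ^{Δ−1}. -/

import Mathlib

/-- The arcs `{(i,j) : i < j}` of the directed graph on nodes `{1, …, Δ}`;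
there are `C(Δ,2)` of them. -/
abbrev UpArc (Δ : ℕ) := {p : Fin Δ × Fin Δ // p.1 < p.2}

/-- `T`: the arc-node incidence matrix of the directed graph on `Δ` nodes with arcs
`{(i,j) : i < j}`, with its last column (the one of node `Δ`) deleted. Row of arc
`(i,j)` has a `+1` in column `i`, a `−1` in column `j` and zeros elsewhere. -/
def incidenceT (Δ : ℕ) : Matrix (UpArc Δ) (Fin (Δ - 1)) ℤ :=
  fun p j => (if (p.1.1 : ℕ) = (j : ℕ) then 1 else 0) -
    (if (p.1.2 : ℕ) = (j : ℕ) then 1 else 0)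

/-- `B`: the `(Δ−1)×(Δ−1)` matrix whose first `Δ−2` rows are the first `Δ−2` standard
unit row vectors and whose last row is `(Δ−1, …, Δ−1, Δ)`. -/
def lowerB (Δ : ℕ) : Matrix (Fin (Δ - 1)) (Fin (Δ - 1)) ℤ :=
  fun i j =>
    if (i : ℕ) < Δ - 2 then (if i = j then 1 else 0)
    else (if (j : ℕ) < Δ - 2 then (Δ : ℤ) - 1 else (Δ : ℤ))

/-- A square integer matrix with entries in `{-1, 0, 1}`, each row of which has at most one `1` and
at most one `-1`, has determinant in `{-1, 0, 1}`. -/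
theorem abs_det_le_one_of_row_distinct {n : ℕ} (M : Matrix (Fin n) (Fin n) ℤ)
    (hM : ∀ i j, |M i j| ≤ 1)
    (hd : ∀ i j k, j ≠ k → M i j = M i k → M i j = 0) : |M.det| ≤ 1 := by
  induction n with
  | zero => simp
  | succ n ih =>
    by_cases h : ∀ i, ∑ j, M i j = 0
    · have h0 : M.det = 0 := by
        refine Matrix.exists_mulVec_eq_zero_iff.mp ⟨1, one_ne_zero, ?_⟩
        ext i
        simpa [Matrix.mulVec, dotProduct] using h i
      simp [h0]
    · push Not at h
      obtain ⟨i, hi⟩ := h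
      obtain ⟨c, -, hc⟩ := Finset.exists_ne_zero_of_sum_ne_zero hi
      have hz : ∀ k, k ≠ c → M i k = 0 := by
        intro k hk
        by_contra hk0
        refine hi ?_
        have h1 := hM i k
        have h2 := hM i c
        have h3 : M i k ≠ M i c := fun e => hk0 (hd i k c hk e)
        rw [abs_le] at h1 h2
        rw [Fintype.sum_eq_add k c hk]
        · omega
        · rintro l ⟨hlk, hlc⟩
          have h4 := hd i l k hlk
          have h5 := hd i l c hlc
          have h6 := hM i l
          rw [abs_le] at h6
          omega
      rw [Matrix.det_succ_row M i, Fintype.sum_eq_single c]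
      · rw [abs_mul, abs_mul, abs_pow, abs_neg, abs_one, one_pow, one_mul]
        refine mul_le_one₀ (hM i c) (abs_nonneg _) (ih _ (fun _ _ => hM _ _) ?_)
        intro a j k hjk e
        exact hd _ _ _ (fun e' => hjk (Fin.succAbove_right_injective e')) e
      · intro k hk
        simp [hz k hk]

theorem abs_det_submatrix_incidenceT_le_one (Δ : ℕ) (f : Fin (Δ - 1) → UpArc Δ) :
    |((incidenceT Δ).submatrix f id).det| ≤ 1 := by
  refine abs_det_le_one_of_row_distinct _ (fun i j => ?_) (fun i j k hjk => ?_)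
  · simp only [Matrix.submatrix_apply, incidenceT, id]
    split_ifs <;> simp
  · have h1 : (j : ℕ) ≠ k := fun e => hjk (Fin.ext e)
    have h2 : ((f i).1.1 : ℕ) < (f i).1.2 := (f i).2
    simp only [Matrix.submatrix_apply, incidenceT, id]
    split_ifs <;> omega

theorem det_lowerB {Δ : ℕ} (hΔ : 2 ≤ Δ) : (lowerB Δ).det = Δ := by
  obtain ⟨n, rfl⟩ := Nat.exists_eq_add_of_le' hΔ
  rw [Matrix.det_of_isLowerTriangular]
  · change ∏ i : Fin (n + 1), lowerB (n + 2) i i = _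
    rw [Fin.prod_univ_castSucc]
    simp [lowerB]
  · intro i j hij
    have h1 : (i : ℕ) < j := hij
    have h2 := j.2
    have h3 : i ≠ j := fun e => by simp [e] at h1
    simp only [lowerB, if_neg h3]
    rw [if_pos (by omega)]

theorem sum_lowerB_apply {Δ : ℕ} (hΔ : 2 ≤ Δ) (j : Fin (Δ - 1)) : ∑ i, lowerB Δ i j = Δ := by
  obtain ⟨n, rfl⟩ := Nat.exists_eq_add_of_le' hΔ
  change ∑ i : Fin (n + 1), lowerB (n + 2) i j = _
  rw [Fin.sum_univ_castSucc]
  change Fin (n + 1) at j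
  induction j using Fin.lastCases with
  | last => simp [lowerB, Fin.ext_iff, fun x : Fin n => x.2.ne]
  | cast j =>
    simp [lowerB]

/-- The entries of `B z` sum to `Δ` times the sum of the entries of `z`. -/
theorem sum_lowerB_mulVec {Δ : ℕ} (hΔ : 2 ≤ Δ) (z : Fin (Δ - 1) → ℤ) :
    ∑ i, (lowerB Δ).mulVec z i = Δ * ∑ j, z j := by
  simp only [Matrix.mulVec, dotProduct]
  rw [Finset.sum_comm, Finset.mul_sum]
  simp only [← Finset.sum_mul, sum_lowerB_apply hΔ]

/-- The arc `(i, j)` between two non-deleted nodes. -/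
theorem incidenceT_mulVec_of_lt {Δ : ℕ} (y : Fin (Δ - 1) → ℤ) {i j : Fin (Δ - 1)} (h : i < j) :
    ∃ p, (incidenceT Δ).mulVec y p = y i - y j := by
  refine ⟨⟨(⟨i, by omega⟩, ⟨j, by omega⟩), h⟩, ?_⟩
  simp [Matrix.mulVec, dotProduct, incidenceT, sub_mul, ← Fin.ext_iff]

/-- The arc from the node `i` to the node whose column is deleted. -/
def arcToLast {Δ : ℕ} (i : Fin (Δ - 1)) : UpArc Δ :=
  ⟨(⟨i, by omega⟩, ⟨Δ - 1, by have := i.2; omega⟩), i.2⟩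

theorem incidenceT_arcToLast {Δ : ℕ} (i : Fin (Δ - 1)) :
    incidenceT Δ (arcToLast i) = (1 : Matrix (Fin (Δ - 1)) (Fin (Δ - 1)) ℤ) i := by
  ext j
  simp [incidenceT, arcToLast, Matrix.one_apply, ← Fin.ext_iff, j.2.ne']

theorem arcToLast_injective (Δ : ℕ) :
    Function.Injective (arcToLast : Fin (Δ - 1) → UpArc Δ) := by
  intro i j h
  simpa [arcToLast, Fin.ext_iff] using h

theorem incidenceT_mulVec_arcToLast {Δ : ℕ} (y : Fin (Δ - 1) → ℤ) (i : Fin (Δ - 1)) :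
    (incidenceT Δ).mulVec y (arcToLast i) = y i := by
  rw [Matrix.mulVec, incidenceT_arcToLast]
  exact congrFun (Matrix.one_mulVec y) i

/-- A nonzero integer vector with zero sum has two entries that differ by at least `2`. -/
theorem exists_two_le_sub_of_sum_eq_zero {ι : Type*} [Fintype ι] {y : ι → ℤ}
    (hs : ∑ i, y i = 0) (hy : y ≠ 0) : ∃ i j, 2 ≤ y i - y j := by
  obtain ⟨k, hk⟩ := Function.ne_iff.mp hy
  obtain ⟨i, -, hi⟩ := Finset.exists_pos_of_sum_zero_of_exists_nonzero y hs
    ⟨k, Finset.mem_univ k, hk⟩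
  obtain ⟨j, -, hj⟩ := Finset.exists_pos_of_sum_zero_of_exists_nonzero (fun i => -y i)
    (by simpa using hs) ⟨k, Finset.mem_univ k, neg_ne_zero.mpr hk⟩
  exact ⟨i, j, by omega⟩

/-- If no arc sees a difference of at least `2`, then an integer vector whose sum is divisible by
`Δ` vanishes. -/
theorem exists_two_le_abs_incidenceT_mulVec {Δ : ℕ} (hΔ : 2 ≤ Δ) {y : Fin (Δ - 1) → ℤ}
    (hy : y ≠ 0) (hdvd : (Δ : ℤ) ∣ ∑ i, y i) : ∃ p, 2 ≤ |(incidenceT Δ).mulVec y p| := by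
  by_contra! hlt
  have h1 : ∀ i, |y i| ≤ 1 := fun i => by
    have := hlt (arcToLast i)
    rw [incidenceT_mulVec_arcToLast] at this
    omega
  have hs : ∑ i, y i = 0 := by
    refine Int.eq_zero_of_abs_lt_dvd hdvd ?_
    calc |∑ i, y i| ≤ ∑ i, |y i| := Finset.abs_sum_le_sum_abs _ _
      _ ≤ ∑ _i : Fin (Δ - 1), 1 := Finset.sum_le_sum fun i _ => h1 i
      _ < Δ := by simp; omega
  obtain ⟨i, j, hij⟩ := exists_two_le_sub_of_sum_eq_zero hs hy
  rcases lt_trichotomy i j with h | rfl | h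
  · obtain ⟨p, hp⟩ := incidenceT_mulVec_of_lt y h
    have := abs_lt.mp (hlt p)
    omega
  · omega
  · obtain ⟨p, hp⟩ := incidenceT_mulVec_of_lt y h
    have := abs_lt.mp (hlt p)
    omega

theorem submatrix_incidenceT_mul_lowerB_det {Δ : ℕ} (hΔ : 2 ≤ Δ) (f : Fin (Δ - 1) → UpArc Δ) :
    ((incidenceT Δ * lowerB Δ).submatrix f id).det =
      ((incidenceT Δ).submatrix f id).det * Δ := by
  rw [← det_lowerB hΔ, ← Matrix.det_mul]
  rfl

theorem exists_two_le_abs_mulVec {Δ : ℕ} (hΔ : 2 ≤ Δ) {z : Fin (Δ - 1) → ℤ} (hz : z ≠ 0) :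
    ∃ p, 2 ≤ |(incidenceT Δ * lowerB Δ).mulVec z p| := by
  rw [← Matrix.mulVec_mulVec]
  refine exists_two_le_abs_incidenceT_mulVec hΔ (fun h => hz ?_) ?_
  · exact Matrix.eq_zero_of_mulVec_eq_zero (by rw [det_lowerB hΔ]; positivity) h
  · rw [sum_lowerB_mulVec hΔ]
    exact dvd_mul_right _ _

/-- For `Δ ≥ 2`, the matrix `A = T·B ∈ ℤ^{C(Δ,2)×(Δ−1)}` has full
column rank, is `Δ`-modular, and satisfies `‖Az‖_∞ ≥ 2` for every nonzero
`z ∈ ℤ^{Δ−1}`. -/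
theorem lower_bound_construction (Δ : ℕ) (hΔ : 2 ≤ Δ) :
    (incidenceT Δ * lowerB Δ).rank = Δ - 1 ∧
    (∀ f : Fin (Δ - 1) → UpArc Δ, Function.Injective f →
      |((incidenceT Δ * lowerB Δ).submatrix f id).det| ≤ (Δ : ℤ)) ∧
    (∃ f : Fin (Δ - 1) → UpArc Δ, Function.Injective f ∧
      |((incidenceT Δ * lowerB Δ).submatrix f id).det| = (Δ : ℤ)) ∧
    (∀ z : Fin (Δ - 1) → ℤ, z ≠ 0 → ∃ p, 2 ≤ |(incidenceT Δ * lowerB Δ).mulVec z p|) := by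
  refine ⟨?_, fun f _ => ?_, ⟨arcToLast, arcToLast_injective Δ, ?_⟩,
    fun z hz => exists_two_le_abs_mulVec hΔ hz⟩
  · rw [Matrix.rank, LinearMap.finrank_range_of_inj]
    · simp
    · refine (injective_iff_map_eq_zero _).mpr fun z hz => ?_
      by_contra hne
      obtain ⟨p, hp⟩ := exists_two_le_abs_mulVec hΔ hne
      rw [← Matrix.mulVecLin_apply, hz] at hp
      simp at hp
  · rw [submatrix_incidenceT_mul_lowerB_det hΔ, abs_mul, Nat.abs_cast]
    exact mul_le_of_le_one_left (by positivity) (abs_det_submatrix_incidenceT_le_one Δ f)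
  · have h : (incidenceT Δ).submatrix arcToLast id = 1 := by
      ext i j
      exact congrFun (incidenceT_arcToLast i) j
    rw [submatrix_incidenceT_mul_lowerB_det hΔ, h]
    simp
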